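/- The map Ω : PPU(b)⁻ → Sub(V⊕) is surjective: for every finitely generated k[t⁻¹]-submodule U of V⊕ there exists φ ∈ PPU(b)⁻ whose induced endomorphism of V⊕ has kernel exactly U. -/

import Mathlib

open Finsupp

variable (k : Type*) [Field k] (V : Type*) [AddCommGroup V] [Module k V]

/-- Multiplication by `t^n` on `V[t,t⁻¹] := ℤ →₀ V` (writing `v = ∑ᵢ tⁱ vᵢ` as the
finitely supported function `i ↦ vᵢ`). -/
noncomputable def shift (n : ℤ) : (ℤ →₀ V) ≃ₗ[k] (ℤ →₀ V) :=
  Finsupp.domLCongr (Equiv.addRight n)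

/-- The coefficient of `tⁿ` of `b̃(v,w) = ∑ₙ tⁿ (∑ᵢ b(v_{i-n}, w_i))`. -/
noncomputable def Btilde (b : LinearMap.BilinForm k V) (n : ℤ) (v w : ℤ →₀ V) : k :=
  w.sum fun i wi => b (v (i - n)) wi

/-- `φ` is a paraunitary transformation: an invertible `k[t,t⁻¹]`-linear
(i.e. `k`-linear and commuting with multiplication by `t`) endomorphism of
`V[t,t⁻¹]` preserving `b̃`. -/
def IsPU (b : LinearMap.BilinForm k V) (φ : (ℤ →₀ V) ≃ₗ[k] (ℤ →₀ V)) : Prop :=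
  (∀ v, φ (shift k V 1 v) = shift k V 1 (φ v)) ∧
  ∀ (n : ℤ) (v w : ℤ →₀ V), Btilde k V b n (φ v) (φ w) = Btilde k V b n v w

/-- The specialization `t = 1` of a `k[t,t⁻¹]`-linear endomorphism `f = ∑ᵢ tⁱ fᵢ`
of `V[t,t⁻¹]`, i.e. the endomorphism `ε₁(f) = ∑ᵢ fᵢ` of `V`. -/
noncomputable def eps (f : (ℤ →₀ V) →ₗ[k] (ℤ →₀ V)) : V →ₗ[k] V :=
  (Finsupp.lsum k fun _ : ℤ => (LinearMap.id : V →ₗ[k] V)) ∘ₗ f ∘ₗ Finsupp.lsingle 0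

/-- `φ` is pure paraunitary: paraunitary and specializing to the identity at `t = 1`. -/
def IsPPU (b : LinearMap.BilinForm k V) (φ : (ℤ →₀ V) ≃ₗ[k] (ℤ →₀ V)) : Prop :=
  IsPU k V b φ ∧ eps k V (φ : (ℤ →₀ V) →ₗ[k] (ℤ →₀ V)) = LinearMap.id

/-- `φ ∈ PPU(b)⁻`: pure paraunitary and all Laurent coefficients `φᵢ` for `i > 0` vanish. -/
def PPUneg (b : LinearMap.BilinForm k V) (φ : (ℤ →₀ V) ≃ₗ[k] (ℤ →₀ V)) : Prop :=
  IsPPU k V b φ ∧ ∀ (x : V) (i : ℤ), 0 < i → φ (Finsupp.single 0 x) i = 0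

/-- `V[t⁻¹] ⊆ V[t,t⁻¹]`: the elements with `vᵢ = 0` for `i > 0`. -/
def Vneg : Submodule k (ℤ →₀ V) where
  carrier := {v | ∀ i : ℤ, 0 < i → v i = 0}
  add_mem' := by
    intro a c ha hc i hi
    simp only [Set.mem_setOf_eq] at *
    simp [Finsupp.add_apply, ha i hi, hc i hi]
  zero_mem' := by intro i _; rfl
  smul_mem' := by
    intro c x hx i hi
    simp only [Set.mem_setOf_eq] at *
    simp [Finsupp.smul_apply, hx i hi]

/-- Multiplication by `t⁻¹` descends to the quotient `V⊕ = V[t,t⁻¹]/V[t⁻¹]`,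
making `V⊕` a module over `k[t⁻¹]`. -/
noncomputable def shiftQ : ((ℤ →₀ V) ⧸ Vneg k V) →ₗ[k] ((ℤ →₀ V) ⧸ Vneg k V) :=
  Submodule.mapQ (Vneg k V) (Vneg k V) (shift k V (-1)).toLinearMap (by
    intro v hv i hi
    have h : (shift k V (-1)).toLinearMap v i = v (i + 1) := by
      simp [shift, Finsupp.domLCongr_apply, Finsupp.equivMapDomain_apply]
    rw [h]
    exact hv (i + 1) (by omega))

/-- A finitely generated `k[t⁻¹]`-submodule of `V⊕`: the `k`-span of the
`k[t⁻¹]`-orbit (under multiplication by powers of `t⁻¹`) of a finite set. -/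
def FGSubQ (U : Submodule k ((ℤ →₀ V) ⧸ Vneg k V)) : Prop :=
  ∃ S : Finset ((ℤ →₀ V) ⧸ Vneg k V),
    U = Submodule.span k {x | ∃ s ∈ S, ∃ n : ℕ, x = (shiftQ k V ^ n) s}


section helpers

variable {k V}

lemma aux_shift_apply (n : ℤ) (v : ℤ →₀ V) (i : ℤ) : shift k V n v i = v (i - n) := by
  simp [shift, Finsupp.domLCongr_apply, Finsupp.equivMapDomain_apply, sub_eq_add_neg]

lemma aux_mem_Vneg (v : ℤ →₀ V) : v ∈ Vneg k V ↔ ∀ i : ℤ, 0 < i → v i = 0 := Iff.rfl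

lemma aux_B_add_left (b : LinearMap.BilinForm k V) (n : ℤ) (v v' w : ℤ →₀ V) :
    Btilde k V b n (v + v') w = Btilde k V b n v w + Btilde k V b n v' w := by
  simp [Btilde, Finsupp.sum_add]

lemma aux_B_add_right (b : LinearMap.BilinForm k V) (n : ℤ) (v w w' : ℤ →₀ V) :
    Btilde k V b n v (w + w') = Btilde k V b n v w + Btilde k V b n v w' := by
  unfold Btilde
  exact Finsupp.sum_add_index' (by simp) (by simp)

lemma aux_B_neg_left (b : LinearMap.BilinForm k V) (n : ℤ) (v w : ℤ →₀ V) :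
    Btilde k V b n (-v) w = - Btilde k V b n v w := by
  have h := aux_B_add_left b n (-v) v w
  have h0 : Btilde k V b n 0 w = 0 := by simp [Btilde]
  rw [neg_add_cancel, h0] at h
  exact eq_neg_of_add_eq_zero_left h.symm

lemma aux_B_neg_right (b : LinearMap.BilinForm k V) (n : ℤ) (v w : ℤ →₀ V) :
    Btilde k V b n v (-w) = - Btilde k V b n v w := by
  have h := aux_B_add_right b n v (-w) w
  have h0 : Btilde k V b n v 0 = 0 := by simp [Btilde]
  rw [neg_add_cancel, h0] at h
  exact eq_neg_of_add_eq_zero_left h.symm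

lemma aux_B_shift_left (b : LinearMap.BilinForm k V) (n m : ℤ) (v w : ℤ →₀ V) :
    Btilde k V b n (shift k V m v) w = Btilde k V b (n + m) v w := by
  simp [Btilde, aux_shift_apply, sub_sub]

lemma aux_B_shift_right (b : LinearMap.BilinForm k V) (n m : ℤ) (v w : ℤ →₀ V) :
    Btilde k V b n v (shift k V m w) = Btilde k V b (n - m) v w := by
  have : shift k V m w = Finsupp.equivMapDomain (Equiv.addRight m) w := by
    simp [shift, Finsupp.domLCongr_apply]
  rw [this]
  unfold Btilde
  rw [Finsupp.sum_equivMapDomain]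
  apply Finsupp.sum_congr
  intro i _
  simp only [Equiv.coe_addRight]
  congr 3
  ring

/-- coefficientwise projection -/
noncomputable def auxE (p : V →ₗ[k] V) : (ℤ →₀ V) →ₗ[k] (ℤ →₀ V) :=
  Finsupp.mapRange.linearMap p

lemma auxE_apply (p : V →ₗ[k] V) (v : ℤ →₀ V) (i : ℤ) : auxE p v i = p (v i) := by
  simp [auxE]

lemma aux_B_E (b : LinearMap.BilinForm k V) (p : V →ₗ[k] V)
    (hp : ∀ x y, b (p x) y = b x (p y)) (n : ℤ) (v w : ℤ →₀ V) :
    Btilde k V b n (auxE p v) w = Btilde k V b n v (auxE p w) := by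
  unfold Btilde
  have : auxE p w = Finsupp.mapRange p (map_zero p) w := rfl
  rw [this, Finsupp.sum_mapRange_index (by simp)]
  simp [auxE_apply, hp]

/-- the basic building block -/
noncomputable def auxP (p : V →ₗ[k] V) (hpp : ∀ x, p (p x) = p x) :
    (ℤ →₀ V) ≃ₗ[k] (ℤ →₀ V) :=
  LinearEquiv.ofLinear
    (LinearMap.id + (shift k V (-1)).toLinearMap ∘ₗ auxE p - auxE p)
    (LinearMap.id + (shift k V 1).toLinearMap ∘ₗ auxE p - auxE p)
    (by
      apply LinearMap.ext; intro v; apply Finsupp.ext; intro i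
      simp [aux_shift_apply, auxE_apply, hpp])
    (by
      apply LinearMap.ext; intro v; apply Finsupp.ext; intro i
      simp [aux_shift_apply, auxE_apply, hpp])

lemma auxP_eq (p : V →ₗ[k] V) (hpp : ∀ x, p (p x) = p x) (v : ℤ →₀ V) :
    auxP p hpp v = v + shift k V (-1) (auxE p v) + -(auxE p v) := by
  simp [auxP, sub_eq_add_neg]

lemma auxP_apply (p : V →ₗ[k] V) (hpp : ∀ x, p (p x) = p x) (v : ℤ →₀ V) (i : ℤ) :
    auxP p hpp v i = v i + p (v (i + 1)) - p (v i) := by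
  simp [auxP, aux_shift_apply, auxE_apply]

lemma auxP_symm_apply (p : V →ₗ[k] V) (hpp : ∀ x, p (p x) = p x) (v : ℤ →₀ V) (i : ℤ) :
    (auxP p hpp).symm v i = v i + p (v (i - 1)) - p (v i) := by
  simp [auxP, aux_shift_apply, auxE_apply]

lemma auxP_shift (p : V →ₗ[k] V) (hpp : ∀ x, p (p x) = p x) (n : ℤ) (v : ℤ →₀ V) :
    auxP p hpp (shift k V n v) = shift k V n (auxP p hpp v) := by
  apply Finsupp.ext; intro i
  simp only [auxP_apply, aux_shift_apply]
  rw [show i + 1 - n = i - n + 1 by ring]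

lemma auxP_B (b : LinearMap.BilinForm k V) (p : V →ₗ[k] V) (hpp : ∀ x, p (p x) = p x)
    (hp : ∀ x y, b (p x) y = b x (p y)) (n : ℤ) (v w : ℤ →₀ V) :
    Btilde k V b n (auxP p hpp v) (auxP p hpp w) = Btilde k V b n v w := by
  have hEE : ∀ v, auxE p (auxE p v) = auxE p v := by
    intro v; apply Finsupp.ext; intro i; simp [auxE_apply, hpp]
  simp only [auxP_eq, aux_B_add_left, aux_B_add_right, aux_B_neg_left, aux_B_neg_right,
    aux_B_shift_left, aux_B_shift_right, aux_B_E b p hp, hEE]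
  simp only [sub_neg_eq_add, neg_add_cancel_right, add_neg_cancel_right]
  ring

/-- specialization at `t = 1` -/
noncomputable def auxS : (ℤ →₀ V) →ₗ[k] V :=
  Finsupp.lsum k fun _ : ℤ => (LinearMap.id : V →ₗ[k] V)

lemma auxS_shift (n : ℤ) (v : ℤ →₀ V) : auxS (k := k) (shift k V n v) = auxS (k := k) v := by
  have : shift k V n v = Finsupp.equivMapDomain (Equiv.addRight n) v := by
    simp [shift, Finsupp.domLCongr_apply]
  rw [this]
  simp [auxS, Finsupp.sum_equivMapDomain]
  rfl

lemma auxS_P (p : V →ₗ[k] V) (hpp : ∀ x, p (p x) = p x) (v : ℤ →₀ V) :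
    auxS (k := k) (auxP p hpp v) = auxS (k := k) v := by
  rw [auxP_eq, map_add, map_add, auxS_shift, map_neg]; simp

lemma aux_shiftQ_mk (v : ℤ →₀ V) :
    shiftQ k V ((Vneg k V).mkQ v) = (Vneg k V).mkQ (shift k V (-1) v) := rfl

lemma aux_shiftQ_pow_mk (n : ℕ) (v : ℤ →₀ V) :
    (shiftQ k V ^ n) ((Vneg k V).mkQ v) = (Vneg k V).mkQ (shift k V (-n) v) := by
  induction n with
  | zero =>
    simp only [pow_zero, Module.End.one_apply]
    congr 1; apply Finsupp.ext; intro i; simp [aux_shift_apply]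
  | succ n ih =>
    rw [pow_succ', Module.End.mul_apply, ih, aux_shiftQ_mk]
    congr 1; apply Finsupp.ext; intro i; simp only [aux_shift_apply]
    congr 1; push_cast; ring

lemma aux_mk_zero (v : ℤ →₀ V) : (Vneg k V).mkQ v = 0 ↔ v ∈ Vneg k V := by
  simp

lemma aux_nilp (x : (ℤ →₀ V) ⧸ Vneg k V) : ∃ N : ℕ, ∀ n ≥ N, (shiftQ k V ^ n) x = 0 := by
  obtain ⟨v, rfl⟩ := (Vneg k V).mkQ_surjective x
  obtain ⟨M, hM⟩ := v.support.bddAbove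
  refine ⟨M.toNat, fun n hn => ?_⟩
  rw [aux_shiftQ_pow_mk, aux_mk_zero]
  intro i hi
  rw [aux_shift_apply]
  by_contra h
  have := hM (Finsupp.mem_support_iff.2 h)
  omega

lemma aux_fin (U : Submodule k ((ℤ →₀ V) ⧸ Vneg k V)) (hU : FGSubQ k V U) :
    FiniteDimensional k U ∧ ∀ x ∈ U, shiftQ k V x ∈ U := by
  obtain ⟨S, rfl⟩ := hU
  constructor
  · apply FiniteDimensional.span_of_finite
    choose N hN using aux_nilp (k := k) (V := V)
    have hf : (⋃ s ∈ S, insert 0 ((fun n : ℕ => (shiftQ k V ^ n) s) '' Set.Iio (N s))).Finite :=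
      S.finite_toSet.biUnion fun s _ => ((Set.finite_Iio _).image _).insert _
    refine hf.subset ?_
    rintro x ⟨s, hs, n, rfl⟩
    simp only [Set.mem_iUnion]
    refine ⟨s, hs, ?_⟩
    by_cases h : n < N s
    · exact Or.inr ⟨n, h, rfl⟩
    · exact Or.inl (hN s n (not_lt.1 h))
  · intro x hx
    induction hx using Submodule.span_induction with
    | mem x h =>
      obtain ⟨s, hs, n, rfl⟩ := h
      refine Submodule.subset_span ⟨s, hs, n + 1, ?_⟩
      rw [pow_succ', Module.End.mul_apply]
    | zero => simp
    | add x y _ _ hx hy => rw [map_add]; exact Submodule.add_mem _ hx hy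
    | smul a x _ hx => rw [map_smul]; exact Submodule.smul_mem _ a hx

lemma aux_socle (U : Submodule k ((ℤ →₀ V) ⧸ Vneg k V))
    (hst : ∀ x ∈ U, shiftQ k V x ∈ U) (hne : U ≠ ⊥) :
    ∃ w : V, w ≠ 0 ∧ (Vneg k V).mkQ (Finsupp.single 1 w) ∈ U := by
  classical
  obtain ⟨u, hu, hu0⟩ := U.exists_mem_ne_zero_of_ne_bot hne
  have hex : ∃ n, (shiftQ k V ^ n) u = 0 := (aux_nilp u).imp fun N h => h N le_rfl
  have hpow : ∀ n : ℕ, (shiftQ k V ^ n) u ∈ U := by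
    intro n
    induction n with
    | zero => simpa using hu
    | succ n ih => rw [pow_succ', Module.End.mul_apply]; exact hst _ ih
  obtain ⟨n, hn⟩ : ∃ n, Nat.find hex = n + 1 := by
    refine Nat.exists_eq_succ_of_ne_zero fun h => hu0 ?_
    have := Nat.find_spec hex
    rw [h] at this
    simpa using this
  have h1 := Nat.find_spec hex
  rw [hn, pow_succ', Module.End.mul_apply] at h1
  have h2 := Nat.find_min hex (m := n) (by omega)
  have h3 := hpow n
  generalize (shiftQ k V ^ n) u = s at h1 h2 h3
  obtain ⟨v, rfl⟩ := (Vneg k V).mkQ_surjective s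
  rw [aux_shiftQ_mk, aux_mk_zero] at h1
  have key : (Vneg k V).mkQ (Finsupp.single 1 (v 1)) = (Vneg k V).mkQ v := by
    rw [← sub_eq_zero, ← map_sub, aux_mk_zero]
    intro i hi
    rw [Finsupp.sub_apply]
    by_cases h : i = 1
    · subst h; simp
    · have := h1 (i - 1) (by omega)
      rw [aux_shift_apply] at this
      rw [Finsupp.single_eq_of_ne h]
      simpa using this
  refine ⟨v 1, fun h => h2 ?_, key ▸ h3⟩
  rw [← key, h]; simp

lemma aux_main (b : LinearMap.BilinForm k V)
    (hsymm : ∀ v w : V, b v w = b w v)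
    (haniso : ∀ v : V, b v v = 0 → v = 0) (d : ℕ) :
    ∀ (U : Submodule k ((ℤ →₀ V) ⧸ Vneg k V)), FiniteDimensional k U →
      (∀ x ∈ U, shiftQ k V x ∈ U) → Module.finrank k U ≤ d →
    ∃ φ : (ℤ →₀ V) ≃ₗ[k] (ℤ →₀ V),
      (∀ v, φ (shift k V 1 v) = shift k V 1 (φ v)) ∧
      (∀ (n : ℤ) (v w : ℤ →₀ V), Btilde k V b n (φ v) (φ w) = Btilde k V b n v w) ∧
      (∀ v, auxS (k := k) (φ v) = auxS (k := k) v) ∧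
      ∀ v : ℤ →₀ V, (φ v ∈ Vneg k V ↔ (Vneg k V).mkQ v ∈ U) := by
  have hbot : ∃ φ : (ℤ →₀ V) ≃ₗ[k] (ℤ →₀ V),
      (∀ v, φ (shift k V 1 v) = shift k V 1 (φ v)) ∧
      (∀ (n : ℤ) (v w : ℤ →₀ V), Btilde k V b n (φ v) (φ w) = Btilde k V b n v w) ∧
      (∀ v, auxS (k := k) (φ v) = auxS (k := k) v) ∧
      ∀ v : ℤ →₀ V, (φ v ∈ Vneg k V ↔
        (Vneg k V).mkQ v ∈ (⊥ : Submodule k ((ℤ →₀ V) ⧸ Vneg k V))) :=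
    ⟨LinearEquiv.refl k _, fun _ => rfl, fun _ _ _ => rfl, fun _ => rfl, fun v => by simp⟩
  induction d with
  | zero =>
    intro U hfd hst hd
    have : U = ⊥ := Submodule.finrank_eq_zero.1 (Nat.le_zero.1 hd)
    subst this
    exact hbot
  | succ d ih =>
    intro U hfd hst hd
    by_cases hne : U = ⊥
    · subst hne; exact hbot
    obtain ⟨w, hw, hwU⟩ := aux_socle U hst hne
    have hbw : b w w ≠ 0 := fun h => hw (haniso w h)
    let p : V →ₗ[k] V := (((b w w)⁻¹ • b w).smulRight w)
    have hpx : ∀ x, p x = ((b w w)⁻¹ * b w x) • w := fun x => by simp [p]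
    have hpp : ∀ x, p (p x) = p x := by
      intro x
      simp only [hpx, map_smul, smul_eq_mul]
      congr 1
      field_simp
    have hp : ∀ x y, b (p x) y = b x (p y) := by
      intro x y
      simp only [hpx, map_smul, LinearMap.smul_apply, smul_eq_mul, hsymm x w]
      ring
    have hpw : p w = w := by rw [hpx, inv_mul_cancel₀ hbw, one_smul]
    have hPV : Vneg k V ≤ (Vneg k V).comap (auxP p hpp).toLinearMap := by
      intro v hv i hi
      have : auxP p hpp v i = 0 := by
        rw [auxP_apply, hv i hi, hv (i + 1) (by omega)]; simp
      exact this
    let Q : ((ℤ →₀ V) ⧸ Vneg k V) →ₗ[k] ((ℤ →₀ V) ⧸ Vneg k V) :=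
      Submodule.mapQ _ _ (auxP p hpp).toLinearMap hPV
    have hQ : ∀ v, Q ((Vneg k V).mkQ v) = (Vneg k V).mkQ (auxP p hpp v) := fun _ => rfl
    have hQker : ∀ x, Q x = 0 → x ∈ U := by
      intro x hx
      obtain ⟨v, rfl⟩ := (Vneg k V).mkQ_surjective x
      rw [hQ, aux_mk_zero] at hx
      have hv : v = (auxP p hpp).symm (auxP p hpp v) := by simp
      generalize auxP p hpp v = u at hx hv
      have : (Vneg k V).mkQ v = (Vneg k V).mkQ (Finsupp.single 1 (p (u 0))) := by
        rw [← sub_eq_zero, ← map_sub, aux_mk_zero]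
        intro i hi
        rw [Finsupp.sub_apply, hv, auxP_symm_apply, hx i hi]
        by_cases h : i = 1
        · subst h; simp
        · rw [hx (i - 1) (by omega), Finsupp.single_eq_of_ne h]; simp
      rw [this, hpx, ← Finsupp.smul_single, map_smul]
      exact U.smul_mem _ hwU
    have hQs : Q ((Vneg k V).mkQ (Finsupp.single 1 w)) = 0 := by
      rw [hQ, aux_mk_zero]
      intro i hi
      rw [auxP_apply, Finsupp.single_eq_of_ne (show i + 1 ≠ 1 by omega)]
      by_cases h : i = 1
      · subst h; simp [hpw]
      · rw [Finsupp.single_eq_of_ne h]; simp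
    have hs0 : (Vneg k V).mkQ (Finsupp.single 1 w) ≠ 0 := by
      rw [Ne, aux_mk_zero]
      intro h
      exact hw (by simpa using h 1 one_pos)
    have hrank : Module.finrank k (U.map Q) ≤ d := by
      have h1 := (Q.domRestrict U).finrank_range_add_finrank_ker
      rw [LinearMap.range_domRestrict] at h1
      have h2 : Module.finrank k (LinearMap.ker (Q.domRestrict U)) ≠ 0 := by
        intro h
        have h3 := Submodule.finrank_eq_zero.1 h
        have h4 : (⟨_, hwU⟩ : U) ∈ LinearMap.ker (Q.domRestrict U) := by
          rw [LinearMap.mem_ker]; exact hQs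
        rw [h3, Submodule.mem_bot] at h4
        exact hs0 (congrArg Subtype.val h4)
      omega
    obtain ⟨φ, h1, h2, h3, h4⟩ := ih (U.map Q) inferInstance (by
      rintro _ ⟨x, hx, rfl⟩
      refine ⟨_, hst x hx, ?_⟩
      obtain ⟨v, rfl⟩ := (Vneg k V).mkQ_surjective x
      rw [aux_shiftQ_mk, hQ, hQ, aux_shiftQ_mk, auxP_shift]) hrank
    refine ⟨(auxP p hpp).trans φ, fun v => ?_, fun n v w => ?_, fun v => ?_, fun v => ?_⟩
    · simp [auxP_shift, h1]
    · simp only [LinearEquiv.trans_apply]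
      rw [h2, auxP_B b p hpp hp]
    · simp only [LinearEquiv.trans_apply]
      rw [h3, auxS_P]
    · rw [LinearEquiv.trans_apply, h4, ← hQ]
      constructor
      · rintro ⟨y, hy, hyx⟩
        have := hQker ((Vneg k V).mkQ v - y) (by rw [map_sub, hyx, sub_self])
        simpa using U.add_mem this hy
      · exact fun h => ⟨_, h, rfl⟩

end helpers

/-- `Ω : PPU(b)⁻ → Sub(V⊕)` is surjective: every finitely generated
`k[t⁻¹]`-submodule of `V⊕` is the kernel of the endomorphism of `V⊕` induced by some
`φ ∈ PPU(b)⁻`. -/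
theorem stmt12 [FiniteDimensional k V] (b : LinearMap.BilinForm k V)
    (hsymm : ∀ v w : V, b v w = b w v)
    (haniso : ∀ v : V, b v v = 0 → v = 0)
    (U : Submodule k ((ℤ →₀ V) ⧸ Vneg k V)) (hU : FGSubQ k V U) :
    ∃ φ : (ℤ →₀ V) ≃ₗ[k] (ℤ →₀ V), PPUneg k V b φ ∧
      ∀ v : ℤ →₀ V, (φ v ∈ Vneg k V ↔ (Vneg k V).mkQ v ∈ U) := by
  obtain ⟨hfd, hst⟩ := aux_fin U hU
  obtain ⟨φ, h1, h2, h3, h4⟩ := aux_main b hsymm haniso _ U hfd hst le_rfl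
  refine ⟨φ, ⟨⟨⟨h1, h2⟩, ?_⟩, ?_⟩, h4⟩
  · apply LinearMap.ext
    intro x
    have := h3 (Finsupp.single 0 x)
    have hx : auxS (k := k) (Finsupp.single (0 : ℤ) x) = x := by simp [auxS]
    rw [hx] at this
    exact this
  · intro x i hi
    refine (h4 (Finsupp.single 0 x)).2 ?_ i hi
    have : (Vneg k V).mkQ (Finsupp.single 0 x) = 0 := by
      rw [aux_mk_zero]
      intro j hj
      rw [Finsupp.single_eq_of_ne hj.ne']
    rw [this]
    exact U.zero_mem
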